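/- For t > 0 define h_t : ℝ → ℝ by h_t(r) = ∫_{−t}^{t} cos(ru) · 2√2 · e^{−t/2} · √(cosh t − cosh u) du (the Selberg transform of the radial kernel k_t(ρ) = e^{−t/2}·1_{[0,t]}(ρ)). Then for every compact interval I ⊂ (1/4, ∞) there exist constants C_I > 0 and T_I > 0 such that for all T > T_I and all r ∈ ℝ with 1/4 + r² ∈ I, one has (1/T) ∫₀^T |h_t(r)|² dt ≥ C_I. -/

import Mathlib

/-- The Selberg transform of the ball-averaging kernel `k_t(ρ) = e^{-t/2} · 1_{[0,t]}(ρ)`: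
`h_t(r) = ∫_{-t}^{t} cos (r u) · 2√2 · e^{-t/2} · √(cosh t - cosh u) du`. -/
noncomputable def selbergTransformBall (t r : ℝ) : ℝ :=
  ∫ u in (-t)..t,
    Real.cos (r * u) *
      (2 * Real.sqrt 2 * Real.exp (-t / 2) * Real.sqrt (Real.cosh t - Real.cosh u))

open MeasureTheory Filter Topology in
theorem sab_exp_cos (r : ℝ) (n : ℕ) (hn : 0 < n) :
    IntegrableOn (fun s : ℝ => Real.cos (r * s) * Real.exp (-s) ^ n) (Set.Ioi 0) ∧
    ∫ s in Set.Ioi (0:ℝ), Real.cos (r * s) * Real.exp (-s) ^ n = n / (n ^ 2 + r ^ 2) := by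
  have hn' : (0:ℝ) < n := by exact_mod_cast hn
  have hD : (0:ℝ) < n ^ 2 + r ^ 2 := by positivity
  have hexp : ∀ s : ℝ, Real.exp (-s) ^ n = Real.exp (-(n:ℝ) * s) := by
    intro s
    rw [← Real.exp_nat_mul]; congr 1; ring
  simp_rw [hexp]
  have hint : IntegrableOn (fun s : ℝ => Real.cos (r * s) * Real.exp (-(n:ℝ) * s)) (Set.Ioi 0) := by
    refine Integrable.mono' (integrableOn_exp_mul_Ioi (a := -(n:ℝ)) (by linarith) 0)
      (by fun_prop) ?_
    refine Eventually.of_forall fun s => ?_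
    rw [norm_mul, Real.norm_eq_abs, Real.norm_eq_abs, abs_of_pos (Real.exp_pos _)]
    exact mul_le_of_le_one_left (Real.exp_pos _).le (Real.abs_cos_le_one _)
  refine ⟨hint, ?_⟩
  have hexp0 : Tendsto (fun s : ℝ => Real.exp (-(n:ℝ) * s)) atTop (𝓝 0) := by
    refine Real.tendsto_exp_atBot.comp ?_
    exact tendsto_id.const_mul_atTop_of_neg (by linarith)
  have h := integral_Ioi_of_hasDerivAt_of_tendsto (a := 0) (m := 0)
    (f := fun s : ℝ => Real.exp (-(n:ℝ) * s) *
      ((-(n:ℝ) * Real.cos (r * s) + r * Real.sin (r * s)) / (n ^ 2 + r ^ 2)))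
    (f' := fun s : ℝ => Real.cos (r * s) * Real.exp (-(n:ℝ) * s))
    (by apply Continuous.continuousWithinAt; fun_prop)
    (by
      intro s _
      have h1 : HasDerivAt (fun s : ℝ => Real.exp (-(n:ℝ) * s))
          (Real.exp (-(n:ℝ) * s) * (-(n:ℝ) * 1)) s :=
        ((hasDerivAt_id s).const_mul (-(n:ℝ))).exp
      have h2 : HasDerivAt (fun s : ℝ => Real.cos (r * s)) (-Real.sin (r * s) * (r * 1)) s :=
        ((hasDerivAt_id s).const_mul r).cos
      have h3 : HasDerivAt (fun s : ℝ => Real.sin (r * s)) (Real.cos (r * s) * (r * 1)) s :=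
        ((hasDerivAt_id s).const_mul r).sin
      have h4 := h1.mul (((h2.const_mul (-(n:ℝ))).add (h3.const_mul r)).div_const ((n:ℝ) ^ 2 + r ^ 2))
      refine h4.congr_deriv ?_
      simp only [Pi.add_apply]
      field_simp
      ring)
    hint
    (by
      have hb : ∀ s : ℝ, |(-(n:ℝ) * Real.cos (r * s) + r * Real.sin (r * s)) / (n ^ 2 + r ^ 2)|
          ≤ (n + |r|) / (n ^ 2 + r ^ 2) := by
        intro s
        rw [abs_div, abs_of_pos hD]
        gcongr
        refine (abs_add_le _ _).trans ?_
        rw [abs_mul, abs_mul, abs_neg, abs_of_pos hn']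
        gcongr
        · exact mul_le_of_le_one_right hn'.le (Real.abs_cos_le_one _)
        · exact mul_le_of_le_one_right (abs_nonneg _) (Real.abs_sin_le_one _)
      refine squeeze_zero_norm (a := fun s : ℝ => Real.exp (-(n:ℝ) * s) * ((n + |r|) / (n ^ 2 + r ^ 2))) ?_ ?_
      · intro s
        rw [norm_mul, Real.norm_eq_abs, Real.norm_eq_abs, abs_of_pos (Real.exp_pos _)]
        gcongr
        exact hb s
      · simpa using hexp0.mul_const ((n + |r|) / (n ^ 2 + r ^ 2)))
  rw [h]
  simp
  ring

open MeasureTheory in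
theorem sab_poly (r : ℝ) (p : Polynomial ℝ) (h0 : p.coeff 0 = 0) (hp : ∀ i, 0 ≤ p.coeff i) :
    IntegrableOn (fun s : ℝ => Real.cos (r * s) * p.eval (Real.exp (-s))) (Set.Ioi 0) ∧
    0 ≤ ∫ s in Set.Ioi (0:ℝ), Real.cos (r * s) * p.eval (Real.exp (-s)) := by
  have e : ∀ s : ℝ, Real.cos (r * s) * p.eval (Real.exp (-s)) =
      ∑ i ∈ Finset.range (p.natDegree + 1), p.coeff i * (Real.cos (r * s) * Real.exp (-s) ^ i) := by
    intro s
    rw [Polynomial.eval_eq_sum_range, Finset.mul_sum]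
    exact Finset.sum_congr rfl fun i _ => by ring
  simp_rw [e]
  have hi : ∀ i ∈ Finset.range (p.natDegree + 1),
      IntegrableOn (fun s : ℝ => p.coeff i * (Real.cos (r * s) * Real.exp (-s) ^ i)) (Set.Ioi 0) := by
    intro i _
    rcases Nat.eq_zero_or_pos i with rfl | h
    · simp [h0]
    · exact (sab_exp_cos r i h).1.const_mul _
  refine ⟨integrable_finsetSum _ hi, ?_⟩
  rw [integral_finsetSum _ hi]
  refine Finset.sum_nonneg fun i _ => ?_
  rcases Nat.eq_zero_or_pos i with rfl | h
  · simp [h0]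
  · rw [integral_const_mul, (sab_exp_cos r i h).2]
    exact mul_nonneg (hp i) (by positivity)

noncomputable def sabP : ℕ → Polynomial ℝ
  | 0 => 0
  | k + 1 => Polynomial.C (1/2) * (Polynomial.X + sabP k ^ 2)

theorem sabP_coeff (k : ℕ) : (sabP k).coeff 0 = 0 ∧ ∀ i, 0 ≤ (sabP k).coeff i := by
  induction k with
  | zero => simp [sabP]
  | succ k ih =>
    constructor
    · simp [sabP, pow_two, Polynomial.mul_coeff_zero, ih.1]
    · intro i
      rw [sabP, Polynomial.coeff_C_mul, Polynomial.coeff_add, pow_two, Polynomial.coeff_mul,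
        Polynomial.coeff_X]
      refine mul_nonneg (by norm_num) (add_nonneg (by split_ifs <;> norm_num) ?_)
      exact Finset.sum_nonneg fun x _ => mul_nonneg (ih.2 _) (ih.2 _)

theorem sabP_eval (x : ℝ) (h0 : 0 ≤ x) (h1 : x ≤ 1) (k : ℕ) :
    0 ≤ (sabP k).eval x ∧ (sabP k).eval x ≤ 1 - Real.sqrt (1 - x) ∧
    (1 - Real.sqrt (1 - x)) - (sabP k).eval x ≤ (1 - Real.sqrt (1 - x)) ^ (k + 1) := by
  have hs := Real.sq_sqrt (show 0 ≤ 1 - x by linarith)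
  have hs0 := Real.sqrt_nonneg (1 - x)
  have hs1 : Real.sqrt (1 - x) ≤ 1 := by
    exact Real.sqrt_le_one.2 (by linarith)
  set g := 1 - Real.sqrt (1 - x) with hg
  have hg0 : 0 ≤ g := by linarith
  have hgq : g = (x + g ^ 2) / 2 := by rw [hg]; nlinarith
  induction k with
  | zero => simp [sabP, hg0]
  | succ k ih =>
    obtain ⟨i1, i2, i3⟩ := ih
    have e : (sabP (k+1)).eval x = (x + (sabP k).eval x ^ 2) / 2 := by
      simp [sabP]; ring
    rw [e]
    set y := (sabP k).eval x
    refine ⟨by positivity, ?_, ?_⟩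
    · nlinarith
    · have : g - (x + y ^ 2) / 2 = (g - y) * ((g + y) / 2) := by linear_combination hgq
      rw [this, pow_succ]
      exact mul_le_mul i3 (by linarith) (by linarith) (by positivity)

theorem sab_q_bound (s : ℝ) (hs : 0 ≤ s) :
    0 ≤ 1 - Real.sqrt (1 - Real.exp (-s)) ∧ 1 - Real.sqrt (1 - Real.exp (-s)) ≤ Real.exp (-s) := by
  have h1 : Real.exp (-s) ≤ 1 := Real.exp_le_one_iff.2 (by linarith)
  have h2 := Real.exp_pos (-s)
  constructor
  · have : Real.sqrt (1 - Real.exp (-s)) ≤ 1 := by exact Real.sqrt_le_one.2 (by linarith)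
    linarith
  · have : 1 - Real.exp (-s) ≤ Real.sqrt (1 - Real.exp (-s)) := by
      apply Real.le_sqrt_of_sq_le; nlinarith
    linarith

open MeasureTheory Filter Topology in
theorem sab_J (r : ℝ) :
    1 / (2 * (1 + r ^ 2)) ≤
      ∫ s in Set.Ioi (0:ℝ), Real.cos (r * s) * (1 - Real.sqrt (1 - Real.exp (-s))) := by
  have hlim : Tendsto (fun k : ℕ => ∫ s in Set.Ioi (0:ℝ), Real.cos (r * s) *
      (sabP (k+1)).eval (Real.exp (-s))) atTop
      (𝓝 (∫ s in Set.Ioi (0:ℝ), Real.cos (r * s) * (1 - Real.sqrt (1 - Real.exp (-s))))) := by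
    refine tendsto_integral_of_dominated_convergence (fun s => Real.exp (-s)) ?_
      (integrableOn_exp_neg_Ioi 0) ?_ ?_
    · intro k
      exact (sab_poly r _ (sabP_coeff _).1 (sabP_coeff _).2).1.aestronglyMeasurable
    · intro k
      refine (ae_restrict_mem measurableSet_Ioi).mono fun s hs => ?_
      have hs' : (0:ℝ) < s := hs
      have h1 : Real.exp (-s) ≤ 1 := Real.exp_le_one_iff.2 (by linarith)
      have h2 := Real.exp_pos (-s)
      obtain ⟨a1, a2, a3⟩ := sabP_eval _ h2.le h1 (k+1)
      have := (sab_q_bound s hs'.le).2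
      rw [norm_mul, Real.norm_eq_abs, Real.norm_eq_abs, abs_of_nonneg a1]
      exact (mul_le_of_le_one_left a1 (Real.abs_cos_le_one _)).trans (by linarith)
    · refine (ae_restrict_mem measurableSet_Ioi).mono fun s hs => ?_
      have hs' : (0:ℝ) < s := hs
      have h1 : Real.exp (-s) < 1 := Real.exp_lt_one_iff.2 (by linarith)
      have h2 := Real.exp_pos (-s)
      refine Tendsto.const_mul _ ?_
      have hg := sab_q_bound s hs'.le
      have hg1 : 1 - Real.sqrt (1 - Real.exp (-s)) < 1 := by
        have : 0 < Real.sqrt (1 - Real.exp (-s)) := Real.sqrt_pos.2 (by linarith)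
        linarith
      have hpow := (tendsto_pow_atTop_nhds_zero_of_lt_one hg.1 hg1).comp (tendsto_add_atTop_nat 2)
      have hlow : Tendsto (fun k : ℕ => (1 - Real.sqrt (1 - Real.exp (-s))) -
          (1 - Real.sqrt (1 - Real.exp (-s))) ^ (k + 2)) atTop
          (𝓝 (1 - Real.sqrt (1 - Real.exp (-s)))) := by
        simpa using hpow.const_sub (1 - Real.sqrt (1 - Real.exp (-s)))
      refine tendsto_of_tendsto_of_tendsto_of_le_of_le hlow tendsto_const_nhds ?_ ?_
      · intro k
        have := (sabP_eval _ h2.le h1.le (k+1)).2.2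
        simp only
        linarith
      · intro k
        exact (sabP_eval _ h2.le h1.le (k+1)).2.1
  refine ge_of_tendsto' hlim fun k => ?_
  have hc := sabP_coeff k
  have hq := sab_poly r (sabP k ^ 2) (by simp [pow_two, Polynomial.mul_coeff_zero, hc.1])
    (by
      intro i
      rw [pow_two, Polynomial.coeff_mul]
      exact Finset.sum_nonneg fun x _ => mul_nonneg (hc.2 _) (hc.2 _))
  have h1 := sab_exp_cos r 1 one_pos
  have e : ∀ s : ℝ, Real.cos (r * s) * (sabP (k+1)).eval (Real.exp (-s)) =
      (1/2) * (Real.cos (r * s) * Real.exp (-s) ^ 1) +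
      (1/2) * (Real.cos (r * s) * (sabP k ^ 2).eval (Real.exp (-s))) := by
    intro s
    simp [sabP]; ring
  simp_rw [e]
  rw [integral_add (h1.1.const_mul _) (hq.1.const_mul _), integral_const_mul, integral_const_mul, h1.2]
  have : 1 / (2 * (1 + r ^ 2)) = 1 / 2 * (((1:ℕ):ℝ) / (((1:ℕ):ℝ) ^ 2 + r ^ 2)) := by
    push_cast; field_simp
  rw [this]
  linarith [hq.2]

theorem sab_avg (r α β T : ℝ) (hr : 0 < r) (hT : 3 / r ≤ T) :
    α ^ 2 * T / 4 ≤ ∫ t in (0:ℝ)..T, (α * Real.cos (r * t) + β * Real.sin (r * t)) ^ 2 := by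
  have h := intervalIntegral.integral_eq_sub_of_hasDerivAt (a := 0) (b := T)
    (f := fun t : ℝ => (α ^ 2 + β ^ 2) / 2 * t
      + (α ^ 2 - β ^ 2) / (2 * r) * (Real.sin (r * t) * Real.cos (r * t))
      + α * β / r * (Real.sin (r * t) * Real.sin (r * t)))
    (f' := fun t => (α * Real.cos (r * t) + β * Real.sin (r * t)) ^ 2)
    (by
      intro s _
      have h2 : HasDerivAt (fun s : ℝ => Real.cos (r * s)) (-Real.sin (r * s) * (r * 1)) s :=
        ((hasDerivAt_id s).const_mul r).cos
      have h3 : HasDerivAt (fun s : ℝ => Real.sin (r * s)) (Real.cos (r * s) * (r * 1)) s :=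
        ((hasDerivAt_id s).const_mul r).sin
      have h4 := (((hasDerivAt_id s).const_mul ((α ^ 2 + β ^ 2) / 2)).add
        ((h3.mul h2).const_mul ((α ^ 2 - β ^ 2) / (2 * r)))).add
        ((h3.mul h3).const_mul (α * β / r))
      refine h4.congr_deriv ?_
      have := Real.sin_sq_add_cos_sq (r * s)
      field_simp
      linear_combination (-(α^2 + β^2)) * this)
    (by apply Continuous.intervalIntegrable; fun_prop)
  rw [h]
  simp only [mul_zero, Real.sin_zero, zero_mul, add_zero, sub_zero]
  have hsc := Real.sin_sq_add_cos_sq (r * T)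
  set S := Real.sin (r * T)
  set D := Real.cos (r * T)
  have hrT : 3 ≤ r * T := by
    rw [div_le_iff₀ hr] at hT; linarith
  have hSD : |S * D| ≤ 1 / 2 := by
    rw [abs_le]; constructor <;> nlinarith [sq_nonneg (S + D), sq_nonneg (S - D)]
  have hSD' := abs_le.1 hSD
  have key : (α ^ 2 + β ^ 2) / 2 * T + (α ^ 2 - β ^ 2) / (2 * r) * (S * D) + α * β / r * (S * S)
      - α ^ 2 * T / 4 = (2 * (α ^ 2 + β ^ 2) * (r * T) + 2 * (α ^ 2 - β ^ 2) * (S * D)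
        + 4 * (α * β) * (S * S) - α ^ 2 * (r * T)) / (4 * r) := by
    field_simp
    ring
  rw [← sub_nonneg, key]
  apply div_nonneg _ (by positivity)
  have hS1 : S * S ≤ 1 := by nlinarith [sq_nonneg D]
  have hS0 : 0 ≤ S * S := mul_self_nonneg S
  have a1 : -(α^2 + β^2) ≤ 2 * (α ^ 2 - β ^ 2) * (S * D) := by
    nlinarith [mul_nonneg (sq_nonneg α) (sub_nonneg.2 hSD'.1), mul_nonneg (sq_nonneg β) (sub_nonneg.2 hSD'.2)]
  have a2 : -(2 * (α^2 + β^2)) ≤ 4 * (α * β) * (S * S) := by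
    nlinarith [mul_nonneg hS0 (sq_nonneg (α + β)), mul_nonneg (sub_nonneg.2 hS1) (add_nonneg (sq_nonneg α) (sq_nonneg β))]
  nlinarith [mul_nonneg (sq_nonneg α) (sub_nonneg.2 hrT), mul_nonneg (sq_nonneg β) (sub_nonneg.2 hrT)]

noncomputable def sabPhi (t s : ℝ) : ℝ :=
  Real.sqrt ((1 - Real.exp (-s)) * (1 - Real.exp (s - 2 * t)))

theorem sab_rewrite (t r : ℝ) :
    selbergTransformBall t r = 4 * ∫ s in (0:ℝ)..t, Real.cos (r * (t - s)) * sabPhi t s := by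
  unfold selbergTransformBall
  set f : ℝ → ℝ := fun u => Real.cos (r * u) *
      (2 * Real.sqrt 2 * Real.exp (-t / 2) * Real.sqrt (Real.cosh t - Real.cosh u)) with hf
  have hc : Continuous f := by fun_prop
  have h1 : ∫ u in (-t)..t, f u = 2 * ∫ u in (0:ℝ)..t, f u := by
    rw [← intervalIntegral.integral_add_adjacent_intervals (b := 0)
      (hc.intervalIntegrable _ _) (hc.intervalIntegrable _ _)]
    have : ∫ u in (-t)..0, f u = ∫ u in (0:ℝ)..t, f u := by
      have := intervalIntegral.integral_comp_neg (a := 0) (b := t) f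
      simp only [neg_zero] at this
      rw [← this]
      congr 1
      ext u
      simp [hf]
    rw [this]; ring
  have h2 : ∫ u in (0:ℝ)..t, f u = ∫ s in (0:ℝ)..t, f (t - s) := by
    rw [intervalIntegral.integral_comp_sub_left]; simp
  rw [h1, h2, ← intervalIntegral.integral_const_mul, ← intervalIntegral.integral_const_mul]
  congr 1
  ext s
  have e : Real.sqrt 2 * Real.exp (-t / 2) * Real.sqrt (Real.cosh t - Real.cosh (t - s))
      = sabPhi t s := by
    have h3 : Real.exp (-t / 2) = Real.sqrt (Real.exp (-t)) := by
      rw [Real.exp_half]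
    rw [h3, ← Real.sqrt_mul (by norm_num), ← Real.sqrt_mul (by positivity), sabPhi]
    congr 1
    rw [Real.cosh_eq, Real.cosh_eq]
    have e1 : Real.exp (-t) * Real.exp t = 1 := by rw [← Real.exp_add]; simp
    have e2 : Real.exp (t - s) = Real.exp t * Real.exp (-s) := by rw [← Real.exp_add]; ring_nf
    have e3 : Real.exp (-(t - s)) = Real.exp (-t) * Real.exp s := by rw [← Real.exp_add]; ring_nf
    have e4 : Real.exp (s - 2 * t) = Real.exp s * (Real.exp (-t) * Real.exp (-t)) := by
      rw [← Real.exp_add, ← Real.exp_add]; ring_nf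
    have e5 : Real.exp (-s) * Real.exp s = 1 := by rw [← Real.exp_add]; simp
    rw [e2, e3, e4]
    linear_combination (1 - Real.exp (-s)) * e1 - (Real.exp (-t))^2 * e5
  simp only [hf]
  rw [← e]; ring

theorem sab_cont (r : ℝ) : Continuous fun t => selbergTransformBall t r := by
  simp_rw [sab_rewrite]
  refine continuous_const.mul ?_
  refine intervalIntegral.continuous_parametric_intervalIntegral_of_continuous
    (f := fun t s => Real.cos (r * (t - s)) * sabPhi t s) ?_ continuous_id
  unfold sabPhi
  simp only [Function.uncurry_def]
  fun_prop

theorem sab_phi_diff (t s : ℝ) (hs : 0 ≤ s) (hst : s ≤ t) :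
    |sabPhi t s - Real.sqrt (1 - Real.exp (-s))| ≤ Real.exp (s - 2 * t) := by
  have h1 : Real.exp (-s) ≤ 1 := Real.exp_le_one_iff.2 (by linarith)
  have h2 : Real.exp (s - 2 * t) ≤ 1 := Real.exp_le_one_iff.2 (by linarith)
  have h3 := Real.exp_pos (-s)
  have h4 := Real.exp_pos (s - 2 * t)
  rw [sabPhi, Real.sqrt_mul (by linarith)]
  have a0 := Real.sqrt_nonneg (1 - Real.exp (-s))
  have a1 : Real.sqrt (1 - Real.exp (-s)) ≤ 1 := by exact Real.sqrt_le_one.2 (by linarith)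
  have b1 : Real.sqrt (1 - Real.exp (s - 2 * t)) ≤ 1 := by exact Real.sqrt_le_one.2 (by linarith)
  have b0 : 1 - Real.exp (s - 2 * t) ≤ Real.sqrt (1 - Real.exp (s - 2 * t)) := by
    apply Real.le_sqrt_of_sq_le; nlinarith
  rw [abs_le]
  constructor <;> nlinarith

open MeasureTheory in
theorem sab_tail (w : ℝ → ℝ) (hw : Continuous w) (hw1 : ∀ s, |w s| ≤ 1) :
    IntegrableOn (fun s => w s * (1 - Real.sqrt (1 - Real.exp (-s)))) (Set.Ioi 0) ∧
    ∀ t, 0 ≤ t → |∫ s in Set.Ioi t, w s * (1 - Real.sqrt (1 - Real.exp (-s)))| ≤ Real.exp (-t) := by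
  have hb : ∀ s : ℝ, 0 ≤ s → ‖w s * (1 - Real.sqrt (1 - Real.exp (-s)))‖ ≤ Real.exp (-s) := by
    intro s hs
    have := sab_q_bound s hs
    rw [norm_mul, Real.norm_eq_abs, Real.norm_eq_abs, abs_of_nonneg this.1]
    exact (mul_le_of_le_one_left this.1 (hw1 s)).trans this.2
  constructor
  · refine Integrable.mono' (integrableOn_exp_neg_Ioi 0) (by
      apply Continuous.aestronglyMeasurable; fun_prop) ?_
    exact (ae_restrict_mem measurableSet_Ioi).mono fun s hs => hb s (le_of_lt hs)
  · intro t ht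
    have := norm_integral_le_of_norm_le (integrableOn_exp_neg_Ioi t)
      ((ae_restrict_mem measurableSet_Ioi).mono fun s hs => hb s (ht.trans (le_of_lt hs)))
    rwa [integral_exp_neg_Ioi] at this

open MeasureTheory in
theorem sab_asymp (r t : ℝ) (hr : 0 < r) (ht : 0 ≤ t) :
    |selbergTransformBall t r - 4 *
      (-(∫ s in Set.Ioi (0:ℝ), Real.cos (r * s) * (1 - Real.sqrt (1 - Real.exp (-s)))) * Real.cos (r * t)
      + (1 / r - ∫ s in Set.Ioi (0:ℝ), Real.sin (r * s) * (1 - Real.sqrt (1 - Real.exp (-s)))) *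
        Real.sin (r * t))| ≤ 12 * Real.exp (-t) := by
  rw [sab_rewrite]
  obtain ⟨ic, tc⟩ := sab_tail (fun s => Real.cos (r * s)) (by fun_prop) (fun s => Real.abs_cos_le_one _)
  obtain ⟨is, ts⟩ := sab_tail (fun s => Real.sin (r * s)) (by fun_prop) (fun s => Real.abs_sin_le_one _)
  have hsub : Set.Ioi t ⊆ Set.Ioi (0:ℝ) := Set.Ioi_subset_Ioi ht
  have ec := intervalIntegral.integral_interval_add_Ioi ic (ic.mono_set hsub)
  have es := intervalIntegral.integral_interval_add_Ioi is (is.mono_set hsub)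
  rw [← ec, ← es]
  have tc' := tc t ht
  have ts' := ts t ht
  have hE := Real.exp_pos (-t)
  set Tc := ∫ s in Set.Ioi t, Real.cos (r * s) * (1 - Real.sqrt (1 - Real.exp (-s)))
  set Ts := ∫ s in Set.Ioi t, Real.sin (r * s) * (1 - Real.sqrt (1 - Real.exp (-s)))
  have hd : |(∫ s in (0:ℝ)..t, Real.cos (r * (t - s)) * sabPhi t s) -
      ∫ s in (0:ℝ)..t, Real.cos (r * (t - s)) * Real.sqrt (1 - Real.exp (-s))| ≤ Real.exp (-t) := by
    rw [← intervalIntegral.integral_sub (by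
        apply Continuous.intervalIntegrable; unfold sabPhi; fun_prop)
      (by apply Continuous.intervalIntegrable; fun_prop)]
    have h1 := intervalIntegral.norm_integral_le_of_norm_le (μ := volume) (a := 0) (b := t)
      (f := fun s => Real.cos (r * (t - s)) * sabPhi t s -
        Real.cos (r * (t - s)) * Real.sqrt (1 - Real.exp (-s)))
      (g := fun s => Real.exp (s - 2 * t)) ht
      (by
        refine Filter.Eventually.of_forall fun s hs => ?_
        rw [← mul_sub, norm_mul, Real.norm_eq_abs, Real.norm_eq_abs]
        exact (mul_le_of_le_one_left (abs_nonneg _) (Real.abs_cos_le_one _)).trans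
          (sab_phi_diff t s hs.1.le hs.2))
      (by apply Continuous.intervalIntegrable; fun_prop)
    refine h1.trans ?_
    have h2 : ∫ s in (0:ℝ)..t, Real.exp (s - 2 * t) = Real.exp (-t) - Real.exp (-(2 * t)) := by
      rw [intervalIntegral.integral_comp_sub_right (fun x => Real.exp x) (2 * t), integral_exp]
      ring_nf
    rw [h2]
    linarith [Real.exp_pos (-(2 * t))]
  have hm : ∫ s in (0:ℝ)..t, Real.cos (r * (t - s)) * Real.sqrt (1 - Real.exp (-s)) =
      Real.sin (r * t) / r
      - Real.cos (r * t) * (∫ s in (0:ℝ)..t, Real.cos (r * s) * (1 - Real.sqrt (1 - Real.exp (-s))))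
      - Real.sin (r * t) * (∫ s in (0:ℝ)..t, Real.sin (r * s) * (1 - Real.sqrt (1 - Real.exp (-s)))) := by
    have h0 : ∫ s in (0:ℝ)..t, Real.cos (r * (t - s)) = Real.sin (r * t) / r := by
      rw [intervalIntegral.integral_comp_sub_left (fun x => Real.cos (r * x)) t]
      simp only [sub_self, sub_zero]
      rw [intervalIntegral.integral_comp_mul_left (fun x => Real.cos x) hr.ne', integral_cos]
      simp
      ring
    rw [← h0, ← intervalIntegral.integral_const_mul, ← intervalIntegral.integral_const_mul,
      ← intervalIntegral.integral_sub (by apply Continuous.intervalIntegrable; fun_prop)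
        (by apply Continuous.intervalIntegrable; fun_prop),
      ← intervalIntegral.integral_sub (by apply Continuous.intervalIntegrable; fun_prop)
        (by apply Continuous.intervalIntegrable; fun_prop)]
    congr 1
    ext s
    rw [mul_sub r t s, Real.cos_sub]
    ring
  rw [hm] at hd
  set A := ∫ s in (0:ℝ)..t, Real.cos (r * (t - s)) * sabPhi t s
  set Ic := ∫ s in (0:ℝ)..t, Real.cos (r * s) * (1 - Real.sqrt (1 - Real.exp (-s)))
  set Is := ∫ s in (0:ℝ)..t, Real.sin (r * s) * (1 - Real.sqrt (1 - Real.exp (-s)))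
  have e : 4 * A - 4 * (-(Ic + Tc) * Real.cos (r * t) + (1 / r - (Is + Ts)) * Real.sin (r * t)) =
      4 * (A - (Real.sin (r * t) / r - Real.cos (r * t) * Ic - Real.sin (r * t) * Is))
      + 4 * (Real.cos (r * t) * Tc) + 4 * (Real.sin (r * t) * Ts) := by
    ring
  rw [e]
  have b1 : |Real.cos (r * t) * Tc| ≤ Real.exp (-t) := by
    rw [abs_mul]
    exact (mul_le_of_le_one_left (abs_nonneg _) (Real.abs_cos_le_one _)).trans tc'
  have b2 : |Real.sin (r * t) * Ts| ≤ Real.exp (-t) := by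
    rw [abs_mul]
    exact (mul_le_of_le_one_left (abs_nonneg _) (Real.abs_sin_le_one _)).trans ts'
  rw [abs_le] at *
  constructor <;> linarith [hd.1, hd.2, b1.1, b1.2, b2.1, b2.2]

theorem sab_lower (r T : ℝ) (hr : 0 < r) (hT : 3 / r ≤ T) :
    2 * (1 / (2 * (1 + r ^ 2))) ^ 2 * T - 72 ≤ ∫ t in (0:ℝ)..T, |selbergTransformBall t r| ^ 2 := by
  have hT0 : 0 ≤ T := le_trans (by positivity) hT
  have hJ := sab_J r
  have hasy := fun t ht => sab_asymp r t hr ht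
  set α := -(∫ s in Set.Ioi (0:ℝ), Real.cos (r * s) * (1 - Real.sqrt (1 - Real.exp (-s)))) with hα
  set β := (1 / r - ∫ s in Set.Ioi (0:ℝ), Real.sin (r * s) * (1 - Real.sqrt (1 - Real.exp (-s))))
  have havg := sab_avg r α β T hr hT
  have hα2 : (1 / (2 * (1 + r ^ 2))) ^ 2 ≤ α ^ 2 := by
    rw [hα, neg_sq]
    gcongr
  have hmono : ∫ t in (0:ℝ)..T, (8 * (α * Real.cos (r * t) + β * Real.sin (r * t)) ^ 2
      - 144 * Real.exp (-2 * t)) ≤ ∫ t in (0:ℝ)..T, |selbergTransformBall t r| ^ 2 := by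
    refine intervalIntegral.integral_mono_on hT0
      (by apply Continuous.intervalIntegrable; fun_prop)
      (((sab_cont r).abs.pow 2).intervalIntegrable _ _) ?_
    intro t ht
    have h := hasy t ht.1
    have e : Real.exp (-2 * t) = Real.exp (-t) ^ 2 := by
      rw [← Real.exp_nat_mul]; congr 1; push_cast; ring
    rw [e, sq_abs]
    set M := α * Real.cos (r * t) + β * Real.sin (r * t)
    set H := selbergTransformBall t r
    have h2 : (H - 4 * M) ^ 2 ≤ (12 * Real.exp (-t)) ^ 2 := sq_le_sq' (abs_le.1 h).1 (abs_le.1 h).2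
    nlinarith [sq_nonneg (2 * H - 4 * M)]
  rw [intervalIntegral.integral_sub (by apply Continuous.intervalIntegrable; fun_prop)
    (by apply Continuous.intervalIntegrable; fun_prop), intervalIntegral.integral_const_mul,
    intervalIntegral.integral_const_mul] at hmono
  have hexp : ∫ t in (0:ℝ)..T, Real.exp (-2 * t) ≤ 1 / 2 := by
    rw [intervalIntegral.integral_comp_mul_left (fun x => Real.exp x) (by norm_num), integral_exp]
    simp
    have := Real.exp_pos (-(2 * T))
    linarith
  nlinarith [mul_le_mul_of_nonneg_right hα2 hT0]

/-- **Lower bound for the time-averaged spectral action (Lemma 3.2 of the paper).**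
For every compact interval `I = [a, b] ⊂ (1/4, ∞)` there exist constants `C_I > 0` and
`T_I > 0` such that for all `T > T_I` and all `r ∈ ℝ` with `1/4 + r² ∈ I`,
`(1/T) ∫₀^T |h_t(r)|² dt ≥ C_I`. -/
theorem spectral_action_lower_bound (a b : ℝ) (ha : 1 / 4 < a) :
    ∃ C : ℝ, 0 < C ∧ ∃ T₀ : ℝ, 0 < T₀ ∧
      ∀ T : ℝ, T₀ < T →
        ∀ r : ℝ, 1 / 4 + r ^ 2 ∈ Set.Icc a b →
          C ≤ (1 / T) * ∫ t in (0 : ℝ)..T, |selbergTransformBall t r| ^ 2 := by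
  have hr0 : 0 < Real.sqrt (a - 1 / 4) := Real.sqrt_pos.2 (by linarith)
  set r0 := Real.sqrt (a - 1 / 4) with hr0def
  have hm : 0 < 1 / (2 * (1 + |b|)) := by positivity
  set m := 1 / (2 * (1 + |b|)) with hmdef
  refine ⟨m ^ 2, by positivity, 3 / r0 + 72 / m ^ 2, by positivity, ?_⟩
  intro T hT r hr
  have habs : ∀ t, selbergTransformBall t r = selbergTransformBall t |r| := by
    intro t
    rcases abs_choice r with h | h <;> rw [h]
    simp [selbergTransformBall]
  simp_rw [habs]
  have hrr : r0 ≤ |r| := by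
    rw [hr0def, ← Real.sqrt_sq_eq_abs]
    exact Real.sqrt_le_sqrt (by linarith [hr.1])
  have hrp : 0 < |r| := hr0.trans_le hrr
  have p1 : 0 < 3 / r0 := by positivity
  have p2 : 0 < 72 / m ^ 2 := by positivity
  have hT0 : 0 < T := by linarith
  have hT1 : 3 / |r| ≤ T := by
    have : 3 / |r| ≤ 3 / r0 := by gcongr
    linarith
  have h := sab_lower |r| T hrp hT1
  have hmr : m ^ 2 ≤ (1 / (2 * (1 + |r| ^ 2))) ^ 2 := by
    rw [hmdef]
    gcongr
    rw [sq_abs]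
    linarith [hr.2, le_abs_self b]
  have hT2 : 72 ≤ m ^ 2 * T := by
    have : 72 / m ^ 2 ≤ T := by linarith
    rw [div_le_iff₀ (by positivity)] at this
    linarith
  rw [one_div, inv_mul_eq_div, le_div_iff₀ hT0]
  nlinarith [mul_le_mul_of_nonneg_right hmr hT0.le]
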